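/- Probabilistic choice right-distributes over sequential composition up to simulation equivalence: for probabilistic automata P, Q, R with pairwise disjoint state spaces and every p ∈ [0,1], (P ⊕_p Q) · R ≡ P · R ⊕_p Q · R (where on the right the two occurrences of R are taken as disjoint copies). -/

import Mathlib

open scoped ENNReal

namespace PCKA

/-- A probabilistic automaton over the (non-silent) action alphabet `α`, with state
space `σ`.  Transition labels are `Option α`, where `none` plays the role of the
silent action `τ`; `trans x a μ` means `x —a→ μ` where `μ` is a (countably
supported) probability distribution over states, `init` is the initial
distribution and `final` the set of final states. -/
structure PAut (α : Type) (σ : Type) where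
  trans : σ → Option α → PMF σ → Prop
  init : PMF σ
  final : Set σ

/-- The lifting `S̄ ⊆ D(X) × D(Y)` of a relation `S ⊆ X × D(Y)`: `μ S̄ ν` iff there
are weights `p n` summing to `1`, states `x n` and distributions `νs n` with
`μ = Σ_n p n · δ_{x n}`, `x n S νs n` for each `n`, and `ν = Σ_n p n · νs n`. -/
def Lift {X Y : Type} (S : X → PMF Y → Prop) (μ : PMF X) (ν : PMF Y) : Prop :=
  ∃ (p : ℕ → ℝ≥0∞) (x : ℕ → X) (νs : ℕ → PMF Y),
    (∑' n, p n) = 1 ∧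
    (∀ s, μ s = ∑' n, p n * (PMF.pure (x n)) s) ∧
    (∀ n, S (x n) (νs n)) ∧
    (∀ t, ν t = ∑' n, p n * (νs n) t)

/-- The double lifting `T̿ ⊆ D(X) × D(Z)` of a relation `T ⊆ X × Z`, via a weight
function `w`. -/
def DLift {X Z : Type} (T : X → Z → Prop) (μ : PMF X) (ψ : PMF Z) : Prop :=
  ∃ w : X → Z → ℝ≥0∞,
    (∀ x z, 0 < w x z → T x z) ∧
    (∀ x, (∑' z, w x z) = μ x) ∧
    (∀ z, (∑' x, w x z) = ψ z)

/-- Flattening `π : D(D(Y)) → D(Y)`, `π(ψ) = Σ_{ν} ψ(ν)·ν`. -/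
noncomputable def flat {Y : Type} (ψ : PMF (PMF Y)) : PMF Y := ψ.bind id

/-- Single transition step, with the τ-transitions extended by reflexivity
(`x —τ→ δ_x` is always allowed). -/
def step {α σ : Type} (P : PAut α σ) (a : Option α) (x : σ) (μ : PMF σ) : Prop :=
  P.trans x a μ ∨ (a = none ∧ μ = PMF.pure x)

/-- Weak internal moves `⇒`: the reflexive-transitive closure of the lifted
(extended) τ-transition relation on distributions. -/
def WeakTau {α σ : Type} (P : PAut α σ) : PMF σ → PMF σ → Prop :=
  Relation.ReflTransGen (Lift (step P none))

/-- Weak `a`-transition `μ ⇒^a μ'`: `μ ⇒ μ₁ —ā→ μ₂ ⇒ μ'`. -/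
def WeakStep {α σ : Type} (P : PAut α σ) (a : Option α) (μ μ' : PMF σ) : Prop :=
  ∃ μ₁ μ₂, WeakTau P μ μ₁ ∧ Lift (step P a) μ₁ μ₂ ∧ WeakTau P μ₂ μ'

/-- A probabilistic simulation from `P` to `Q` (Deng et al. style). -/
structure IsSimulation {α σ τ' : Type} (P : PAut α σ) (Q : PAut α τ')
    (S : σ → PMF τ' → Prop) : Prop where
  init : ∃ ν₀', WeakTau Q Q.init ν₀' ∧ Lift S P.init ν₀'
  step : ∀ x a μ', P.trans x a μ' → ∀ ν, S x ν →
    ∃ ν', WeakStep Q a ν ν' ∧ Lift S μ' ν'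
  final : ∀ x ν, x ∈ P.final → S x ν →
    ∃ ν', WeakTau Q ν ν' ∧ ∀ y ∈ ν'.support, y ∈ Q.final

/-- A probabilistic weak forward simulation from `P` to `Q` (Segala style). -/
structure IsWFSimulation {α σ τ' : Type} (P : PAut α σ) (Q : PAut α τ')
    (S : σ → PMF τ' → Prop) : Prop where
  init : ∃ ψ₀ : PMF (PMF τ'), DLift S P.init ψ₀ ∧ WeakTau Q Q.init (flat ψ₀)
  step : ∀ x a μ', P.trans x a μ' → ∀ ν, S x ν →
    ∃ ψ : PMF (PMF τ'), WeakStep Q a ν (flat ψ) ∧ DLift S μ' ψ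
  final : ∀ x ν, x ∈ P.final → S x ν →
    ∃ ψ : PMF (PMF τ'), (∀ ρ ∈ ψ.support, ∀ y ∈ ρ.support, y ∈ Q.final) ∧
      WeakTau Q ν (flat ψ)

/-- `P ≤ Q`: there exists a probabilistic simulation from `P` to `Q`. -/
def Sim {α σ τ' : Type} (P : PAut α σ) (Q : PAut α τ') : Prop :=
  ∃ S, IsSimulation P Q S

/-- Simulation equivalence `P ≡ Q`. -/
def SimEquiv {α σ τ' : Type} (P : PAut α σ) (Q : PAut α τ') : Prop :=
  Sim P Q ∧ Sim Q P

/-- Convex combination `p·μ + (1−p)·ν` of two distributions. -/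
noncomputable def mix {X : Type} (p : ℝ≥0∞) (hp : p ≤ 1) (μ ν : PMF X) : PMF X :=
  ⟨fun x => p * μ x + (1 - p) * ν x, by
    refine ENNReal.summable.hasSum_iff.mpr ?_
    rw [ENNReal.tsum_add, ENNReal.tsum_mul_left, ENNReal.tsum_mul_left,
      μ.tsum_coe, ν.tsum_coe, mul_one, mul_one, add_tsub_cancel_of_le hp]⟩

/-- Product distribution `μ × ν`, with `(μ × ν)(x,y) = μ(x)·ν(y)`. -/
noncomputable def pprod {X Y : Type} (μ : PMF X) (ν : PMF Y) : PMF (X × Y) :=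
  μ.bind fun x => ν.map fun y => (x, y)

/-- The skip automaton `1`: one state, no transitions, that state is final. -/
noncomputable def skip (α : Type) : PAut α Unit :=
  ⟨fun _ _ _ => False, PMF.pure (), Set.univ⟩

/-- The deadlock automaton `0`: one state, no transitions, no final state. -/
noncomputable def deadlock (α : Type) : PAut α Unit :=
  ⟨fun _ _ _ => False, PMF.pure (), ∅⟩

/-- Nondeterministic choice `P + Q`: disjoint union of the two automata (realised
by the sum type) plus a fresh initial state `z = none` with `z —τ→ μ₀` and
`z —τ→ ν₀`. -/
noncomputable def nchoice {α σ τ' : Type} (P : PAut α σ) (Q : PAut α τ') :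
    PAut α (Option (σ ⊕ τ')) where
  trans := fun s a μ =>
    match s with
    | none => a = none ∧
        (μ = P.init.map (fun x => some (Sum.inl x)) ∨
         μ = Q.init.map (fun y => some (Sum.inr y)))
    | some (Sum.inl x) => ∃ μ', P.trans x a μ' ∧ μ = μ'.map (fun x => some (Sum.inl x))
    | some (Sum.inr y) => ∃ ν', Q.trans y a ν' ∧ μ = ν'.map (fun y => some (Sum.inr y))
  init := PMF.pure none
  final := {s | (∃ x ∈ P.final, s = some (Sum.inl x)) ∨ (∃ y ∈ Q.final, s = some (Sum.inr y))}

/-- Sequential composition `P · Q`: disjoint union (realised by the sum type),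
with a τ-transition from each final state of `P` to the initial distribution of
`Q`; initial distribution that of `P`, final states those of `Q`. -/
noncomputable def pseq {α σ τ' : Type} (P : PAut α σ) (Q : PAut α τ') :
    PAut α (σ ⊕ τ') where
  trans := fun s a μ =>
    match s with
    | Sum.inl x =>
        (∃ μ', P.trans x a μ' ∧ μ = μ'.map Sum.inl) ∨
        (a = none ∧ x ∈ P.final ∧ μ = Q.init.map Sum.inr)
    | Sum.inr y => ∃ ν', Q.trans y a ν' ∧ μ = ν'.map Sum.inr
  init := P.init.map Sum.inl
  final := {s | ∃ y ∈ Q.final, s = Sum.inr y}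

/-- Kleene star `P*`: a fresh state `z = none` which is initial and the only
final state, with `z —τ→ μ₀` and `x —τ→ δ_z` for each final state `x` of `P`. -/
noncomputable def pstar {α σ : Type} (P : PAut α σ) : PAut α (Option σ) where
  trans := fun s a μ =>
    match s with
    | none => a = none ∧ μ = P.init.map some
    | some x =>
        (∃ μ', P.trans x a μ' ∧ μ = μ'.map some) ∨
        (a = none ∧ x ∈ P.final ∧ μ = PMF.pure none)
  init := PMF.pure none
  final := {none}

/-- Probabilistic choice `P ⊕_p Q`: disjoint union with initial distribution
`p·μ₀ + (1−p)·ν₀`. -/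
noncomputable def pchoice {α σ τ' : Type} (p : ℝ≥0∞) (hp : p ≤ 1)
    (P : PAut α σ) (Q : PAut α τ') : PAut α (σ ⊕ τ') where
  trans := fun s a μ =>
    match s with
    | Sum.inl x => ∃ μ', P.trans x a μ' ∧ μ = μ'.map Sum.inl
    | Sum.inr y => ∃ ν', Q.trans y a ν' ∧ μ = ν'.map Sum.inr
  init := mix p hp (P.init.map Sum.inl) (Q.init.map Sum.inr)
  final := {s | (∃ x ∈ P.final, s = Sum.inl x) ∨ (∃ y ∈ Q.final, s = Sum.inr y)}

/-- CSP-style parallel composition `P ∥_A Q` synchronising on the frame `A`: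
actions in `A` must be performed jointly, all other actions (including τ) are
interleaved. -/
noncomputable def par {α σ τ' : Type} (A : Set α) (P : PAut α σ) (Q : PAut α τ') :
    PAut α (σ × τ') where
  trans := fun s a μπ => ∃ μ ν, μπ = pprod μ ν ∧
    ((∃ b ∈ A, a = some b ∧ P.trans s.1 a μ ∧ Q.trans s.2 a ν) ∨
     ((∀ b ∈ A, a ≠ some b) ∧ P.trans s.1 a μ ∧ ν = PMF.pure s.2) ∨
     ((∀ b ∈ A, a ≠ some b) ∧ Q.trans s.2 a ν ∧ μ = PMF.pure s.1))
  init := pprod P.init Q.init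
  final := {s | s.1 ∈ P.final ∧ s.2 ∈ Q.final}

/-!
Collapsing the two copies of `R` to one is a functional bisimulation from `P · R ⊕_p Q · R` to
`(P ⊕_p Q) · R` that carries the initial distribution to the initial distribution. The graph of a
functional bisimulation and its converse, read as relations between states and point masses, are
both probabilistic simulations.
-/

section Mix

variable {X Y : Type} (p : ℝ≥0∞) (hp : p ≤ 1) (μ ν : PMF X)

theorem mix_apply (x : X) : mix p hp μ ν x = p * μ x + (1 - p) * ν x := rfl

theorem map_mix (f : X → Y) : (mix p hp μ ν).map f = mix p hp (μ.map f) (ν.map f) := by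
  ext y
  simp only [PMF.map, PMF.bind_apply, mix_apply, add_mul, mul_assoc, ENNReal.tsum_add,
    ENNReal.tsum_mul_left]

end Mix

section Lift

theorem exists_pmf_nat_map_eq {Z : Type*} (ρ : PMF Z) :
    ∃ (q : PMF ℕ) (d : ℕ → Z), q.map d = ρ ∧ ∀ n, d n ∈ ρ.support := by
  obtain ⟨d, hd⟩ := ρ.support_countable.exists_eq_range ρ.support_nonempty
  refine ⟨ρ.map (Function.invFun d), d, ?_, fun n => hd ▸ Set.mem_range_self n⟩
  have d_invFun : ∀ z ∈ ρ.support, d (Function.invFun d z) = z := fun z hz =>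
    Function.invFun_eq (hd ▸ hz : z ∈ Set.range d)
  calc (ρ.map (Function.invFun d)).map d
      = ρ.bindOnSupport fun z _ => PMF.pure (d (Function.invFun d z)) := by
        rw [PMF.map_comp, PMF.bindOnSupport_eq_bind]; rfl
    _ = ρ.bindOnSupport fun z _ => PMF.pure z := by
        congr! 3 with z hz
        rw [d_invFun z hz]
    _ = ρ := by rw [PMF.bindOnSupport_eq_bind, PMF.bind_pure]

variable {X Y : Type} {S : X → PMF Y → Prop}

theorem lift_map_bind {Z : Type*} (ρ : PMF Z) (f : Z → X) (κ : Z → PMF Y)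
    (h : ∀ z ∈ ρ.support, S (f z) (κ z)) : Lift S (ρ.map f) (ρ.bind κ) := by
  obtain ⟨q, d, rfl, hd⟩ := exists_pmf_nat_map_eq ρ
  refine ⟨q, f ∘ d, κ ∘ d, q.tsum_coe, fun s => ?_, fun n => h (d n) (hd n), fun t => ?_⟩
  · rw [PMF.map_comp]; rfl
  · rw [PMF.bind_map]; rfl

theorem lift_pure {x : X} {ν : PMF Y} (h : S x ν) : Lift S (PMF.pure x) ν := by
  simpa [PMF.pure_map] using
    lift_map_bind (PMF.pure x) id (fun _ => ν) (by simpa using h)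

end Lift

theorem weakStep_pure_of_trans {α σ : Type} {P : PAut α σ} {x : σ} {a : Option α} {μ : PMF σ}
    (h : P.trans x a μ) : WeakStep P a (PMF.pure x) μ :=
  ⟨PMF.pure x, μ, .refl, lift_pure (.inl h), .refl⟩

/-- `f` is a functional (strong) bisimulation from `P` to `Q`, that is, a homomorphism of the
coalgebras of transitions and final states. Initial distributions are left out, so that the
injections of two automata into their probabilistic choice qualify. -/
structure IsFunctionalBisim {α σ τ' : Type} (P : PAut α σ) (Q : PAut α τ') (f : σ → τ') :
    Prop where
  trans_iff : ∀ x a ν, Q.trans (f x) a ν ↔ ∃ μ, P.trans x a μ ∧ ν = μ.map f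
  final_iff : ∀ x, f x ∈ Q.final ↔ x ∈ P.final

namespace IsFunctionalBisim

section SimEquiv

variable {α σ τ' : Type} {P : PAut α σ} {Q : PAut α τ'} {f : σ → τ'}

theorem sim (h : IsFunctionalBisim P Q f) (hinit : P.init.map f = Q.init) : Sim P Q := by
  have lift_graph (μ : PMF σ) : Lift (fun x ν => ν = PMF.pure (f x)) μ (μ.map f) := by
    simpa [PMF.map_id, PMF.bind_pure_comp] using lift_map_bind μ id (PMF.pure ∘ f) fun _ _ => rfl
  refine ⟨fun x ν => ν = PMF.pure (f x), ⟨Q.init, .refl, hinit ▸ lift_graph P.init⟩, ?_, ?_⟩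
  · rintro x a μ hμ _ rfl
    exact ⟨μ.map f, weakStep_pure_of_trans ((h.trans_iff x a _).mpr ⟨μ, hμ, rfl⟩), lift_graph μ⟩
  · rintro x _ hx rfl
    exact ⟨PMF.pure (f x), .refl, by simpa using (h.final_iff x).mpr hx⟩

theorem sim_symm (h : IsFunctionalBisim P Q f) (hinit : P.init.map f = Q.init) : Sim Q P := by
  have lift_graph (μ : PMF σ) : Lift (fun y ν => ∃ x, f x = y ∧ ν = PMF.pure x) (μ.map f) μ := by
    simpa using lift_map_bind μ f PMF.pure fun x _ => ⟨x, rfl, rfl⟩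
  refine ⟨fun y ν => ∃ x, f x = y ∧ ν = PMF.pure x,
    ⟨P.init, .refl, hinit ▸ lift_graph P.init⟩, ?_, ?_⟩
  · rintro _ a ν hν _ ⟨x, rfl, rfl⟩
    obtain ⟨μ, hμ, rfl⟩ := (h.trans_iff x a ν).mp hν
    exact ⟨μ, weakStep_pure_of_trans hμ, lift_graph μ⟩
  · rintro _ _ hx ⟨x, rfl, rfl⟩
    exact ⟨PMF.pure x, .refl, by simpa using (h.final_iff x).mp hx⟩

theorem simEquiv (h : IsFunctionalBisim P Q f) (hinit : P.init.map f = Q.init) : SimEquiv P Q :=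
  ⟨h.sim hinit, h.sim_symm hinit⟩

end SimEquiv

section Constructions

variable {α σ₁ σ₂ τ' : Type} {P : PAut α σ₁} {Q : PAut α σ₂} {A : PAut α τ'}

theorem pchoice_inl (p : ℝ≥0∞) (hp : p ≤ 1) (P : PAut α σ₁) (Q : PAut α σ₂) :
    IsFunctionalBisim P (pchoice p hp P Q) Sum.inl where
  trans_iff _ _ _ := .rfl
  final_iff x := by simp [pchoice]

theorem pchoice_inr (p : ℝ≥0∞) (hp : p ≤ 1) (P : PAut α σ₁) (Q : PAut α σ₂) :
    IsFunctionalBisim Q (pchoice p hp P Q) Sum.inr where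
  trans_iff _ _ _ := .rfl
  final_iff y := by simp [pchoice]

theorem pchoice_elim {f : σ₁ → τ'} {g : σ₂ → τ'} (hf : IsFunctionalBisim P A f)
    (hg : IsFunctionalBisim Q A g) (p : ℝ≥0∞) (hp : p ≤ 1) :
    IsFunctionalBisim (pchoice p hp P Q) A (Sum.elim f g) where
  trans_iff := by
    rintro (x | y) a ν
    · simp [pchoice, hf.trans_iff, PMF.map_comp]
    · simp [pchoice, hg.trans_iff, PMF.map_comp]
  final_iff := by
    rintro (x | y)
    · simp [pchoice, hf.final_iff]
    · simp [pchoice, hg.final_iff]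

theorem pseq_map {f : σ₁ → τ'} (hf : IsFunctionalBisim P A f) (R : PAut α σ₂) :
    IsFunctionalBisim (pseq P R) (pseq A R) (Sum.map f id) where
  trans_iff := by
    rintro (x | z) a ν
    · simp [pseq, hf.trans_iff, hf.final_iff, PMF.map_comp, or_and_right, exists_or,
        and_assoc, Sum.map]
    · simp [pseq, PMF.map_comp, Sum.map]
  final_iff := by
    rintro (x | z) <;> simp [pseq]

end Constructions

end IsFunctionalBisim

/-- probabilistic choice right-distributes over sequential
composition up to simulation equivalence: `(P ⊕_p Q) · R ≡ P · R ⊕_p Q · R`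
(the two occurrences of `R` on the right are disjoint copies). -/
theorem pchoice_right_distrib_seq {α σ₁ σ₂ σ₃ : Type}
    (P : PAut α σ₁) (Q : PAut α σ₂) (R : PAut α σ₃)
    (p : ℝ≥0∞) (hp : p ≤ 1) :
    SimEquiv (pseq (pchoice p hp P Q) R)
      (pchoice p hp (pseq P R) (pseq Q R)) := by
  let merge : (σ₁ ⊕ σ₃) ⊕ (σ₂ ⊕ σ₃) → (σ₁ ⊕ σ₂) ⊕ σ₃ :=
    Sum.elim (Sum.map Sum.inl id) (Sum.map Sum.inr id)
  have merge_bisim : IsFunctionalBisim (pchoice p hp (pseq P R) (pseq Q R))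
      (pseq (pchoice p hp P Q) R) merge :=
    .pchoice_elim (.pseq_map (.pchoice_inl p hp P Q) R) (.pseq_map (.pchoice_inr p hp P Q) R) p hp
  have map_init : (pchoice p hp (pseq P R) (pseq Q R)).init.map merge =
      (pseq (pchoice p hp P Q) R).init := by
    simp [merge, pchoice, pseq, map_mix, PMF.map_comp, Sum.map, ← Function.comp_assoc]
  exact (merge_bisim.simEquiv map_init).symm

end PCKA
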